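/- arXiv:2512.11361 — 3 statements merged into one kernel-verified Lean document; each statement's English description precedes it below -/
import Mathlib

section
/- Let L be an algebraic signature and E an equational theory over L with no drop equations. Then for every type X (with decidable equality) and all terms t, s : L.Term X, if t ∼_X s (where ∼_X is the congruence generated by E), then Term.varFinset t = Term.varFinset s; i.e., congruent terms have exactly the same free variables. -/
open FirstOrder

universe u v

/-- The congruence on `L.Term X` generated by an equational theory
`E ⊆ L.Term ℕ × L.Term ℕ`: the smallest equivalence relation containing all substitution
instances of the equations of `E` and closed under the operations of the signature. -/
inductive EqCongr (L : FirstOrder.Language.{u, v}) (E : Set (L.Term ℕ × L.Term ℕ))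
    {X : Type u} : L.Term X → L.Term X → Prop
  | ax {t s : L.Term ℕ} (h : (t, s) ∈ E) (σ : ℕ → L.Term X) :
      EqCongr L E (t.subst σ) (s.subst σ)
  | refl (t : L.Term X) : EqCongr L E t t
  | symm {t s : L.Term X} : EqCongr L E t s → EqCongr L E s t
  | trans {t s r : L.Term X} : EqCongr L E t s → EqCongr L E s r → EqCongr L E t r
  | func {n : ℕ} (f : L.Functions n) {t s : Fin n → L.Term X}
      (h : ∀ i, EqCongr L E (t i) (s i)) :
      EqCongr L E (FirstOrder.Language.Term.func f t) (FirstOrder.Language.Term.func f s)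

section Subst

open FirstOrder.Language

variable {L : Language} {α β : Type*} [DecidableEq α] [DecidableEq β]

theorem varFinset_subst (t : L.Term α) (σ : α → L.Term β) :
    (t.subst σ).varFinset = t.varFinset.biUnion fun a => (σ a).varFinset := by
  induction t with
  | var a => simp only [Term.subst, Term.varFinset, Finset.singleton_biUnion]
  | func f ts ih => simp only [Term.subst, Term.varFinset, ih, Finset.biUnion_biUnion]

theorem varFinset_subst_congr {t s : L.Term α} (h : t.varFinset = s.varFinset)
    (σ : α → L.Term β) : (t.subst σ).varFinset = (s.subst σ).varFinset := by
  rw [varFinset_subst, varFinset_subst, h]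

theorem varFinset_func_congr {n : ℕ} (f : L.Functions n) {ts ss : Fin n → L.Term α}
    (h : ∀ i, (ts i).varFinset = (ss i).varFinset) :
    (Term.func f ts).varFinset = (Term.func f ss).varFinset :=
  Finset.biUnion_congr rfl fun i _ => h i

end Subst

theorem congr_of_no_drop_preserves_varFinset_general
    {L : FirstOrder.Language.{u, v}} {E : Set (L.Term ℕ × L.Term ℕ)}
    (hnd : ∀ p ∈ E, p.1.varFinset = p.2.varFinset)
    {X : Type u} [DecidableEq X] {t s : L.Term X} (h : EqCongr L E t s) :
    t.varFinset = s.varFinset := by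
  induction h with
  | ax hE σ => exact varFinset_subst_congr (hnd _ hE) σ
  | refl t => rfl
  | symm _ ih => exact ih.symm
  | trans _ _ ih₁ ih₂ => exact ih₁.trans ih₂
  | func f _ ih => exact varFinset_func_congr f ih

theorem congr_of_no_drop_preserves_varFinset
    (L : FirstOrder.Language.{u, v}) (halg : ∀ n, IsEmpty (L.Relations n))
    (E : Set (L.Term ℕ × L.Term ℕ))
    (hnd : ∀ p ∈ E, p.1.varFinset = p.2.varFinset)
    {X : Type u} [DecidableEq X] (t s : L.Term X)
    (h : EqCongr L E t s) :
    t.varFinset = s.varFinset :=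
  congr_of_no_drop_preserves_varFinset_general hnd h
end

section
/- Let L be an algebraic signature and E an equational theory over L with no drop equations. Let j : A → B be an injective function. Then for all terms t, s : L.Term A, if t.relabel j ∼_B s.relabel j then t ∼_A s (where ∼_X denotes the congruence generated by E on L.Term X). Consequently the induced map of quotients (L.Term A)/∼_A → (L.Term B)/∼_B is injective. -/
open FirstOrder

universe u v

lemma relabel_subst {L : FirstOrder.Language.{u, v}} {α : Type*} {X Y : Type u}
    (t : L.Term α) (σ : α → L.Term X) (f : X → Y) :
    (t.subst σ).relabel f = t.subst (fun a => (σ a).relabel f) := by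
  induction t with
  | var a => rfl
  | func g ts ih => simp [Language.Term.subst, Language.Term.relabel, ih]

lemma EqCongr.relabel {L : FirstOrder.Language.{u, v}} {E : Set (L.Term ℕ × L.Term ℕ)}
    {X Y : Type u} (f : X → Y) {t s : L.Term X} (h : EqCongr L E t s) :
    EqCongr L E (t.relabel f) (s.relabel f) := by
  induction h with
  | ax h σ => rw [relabel_subst, relabel_subst]; exact EqCongr.ax h _
  | refl t => exact EqCongr.refl _
  | symm _ ih => exact ih.symm
  | trans _ _ ih1 ih2 => exact ih1.trans ih2
  | func g _ ih => exact EqCongr.func g ih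

/-- The setoid given by the congruence generated by `E`. -/
def congrSetoid (L : FirstOrder.Language.{u, v}) (E : Set (L.Term ℕ × L.Term ℕ))
    (X : Type u) : Setoid (L.Term X) :=
  ⟨EqCongr L E, ⟨EqCongr.refl, EqCongr.symm, EqCongr.trans⟩⟩

/-- The free model of the algebraic theory `(L, E)` on a type `X`:
terms modulo the congruence generated by `E`. -/
def T (L : FirstOrder.Language.{u, v}) (E : Set (L.Term ℕ × L.Term ℕ)) (X : Type u) : Type u :=
  Quotient (congrSetoid L E X)

/-- The action of the free model construction on functions, induced by `Term.relabel`. -/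
def Tmap (L : FirstOrder.Language.{u, v}) (E : Set (L.Term ℕ × L.Term ℕ)) {X Y : Type u}
    (f : X → Y) : T L E X → T L E Y :=
  Quotient.map (FirstOrder.Language.Term.relabel f) (fun _ _ h => h.relabel f)

/-! The congruence is stable under substitution, so it suffices to undo `j` by a substitution.
Since `j` is injective, some substitution sends each variable `j a` back to `a`; the values at the
variables outside the range of `j` do not matter. -/

section Substitution

variable {L : FirstOrder.Language.{u, v}} {α β γ : Type*}

lemma subst_subst (t : L.Term α) (σ : α → L.Term β) (τ : β → L.Term γ) :
    (t.subst σ).subst τ = t.subst fun a => (σ a).subst τ := by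
  induction t with
  | var a => rfl
  | func g ts ih => simp only [Language.Term.subst, ih]

lemma subst_relabel (t : L.Term α) (f : α → β) (τ : β → L.Term γ) :
    (t.relabel f).subst τ = t.subst (τ ∘ f) := by
  induction t with
  | var a => rfl
  | func g ts ih => simp only [Language.Term.relabel, Language.Term.subst, ih]

lemma subst_var (t : L.Term α) : t.subst Language.Term.var = t := by
  induction t with
  | var a => rfl
  | func g ts ih => simp only [Language.Term.subst, ih]

end Substitution

section Reflection

variable {L : FirstOrder.Language.{u, v}} {E : Set (L.Term ℕ × L.Term ℕ)} {A B : Type u}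
  {t s : L.Term A} {j : A → B}

lemma EqCongr.subst (τ : A → L.Term B) (h : EqCongr L E t s) :
    EqCongr L E (t.subst τ) (s.subst τ) := by
  induction h with
  | ax h σ => simpa only [subst_subst] using EqCongr.ax h _
  | refl t => exact EqCongr.refl _
  | symm _ ih => exact ih.symm
  | trans _ _ ih₁ ih₂ => exact ih₁.trans ih₂
  | func g _ ih => exact EqCongr.func g ih

lemma EqCongr.of_relabel_of_comp_eq_var {τ : B → L.Term A} (hτ : τ ∘ j = Language.Term.var)
    (h : EqCongr L E (t.relabel j) (s.relabel j)) : EqCongr L E t s := by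
  simpa only [subst_relabel, hτ, subst_var] using h.subst τ

lemma eqCongr_relabel_iff (hj : Function.Injective j) :
    EqCongr L E (t.relabel j) (s.relabel j) ↔ EqCongr L E t s :=
  -- `A` may be empty and `L` without constants, so `t` serves as a term to extend by.
  ⟨.of_relabel_of_comp_eq_var (Function.extend_comp hj Language.Term.var fun _ => t), .relabel j⟩

lemma Tmap_injective (hj : Function.Injective j) : Function.Injective (Tmap L E j) := by
  rintro ⟨t⟩ ⟨s⟩ h
  exact Quotient.sound ((eqCongr_relabel_iff hj).1 (Quotient.exact h))

end Reflection

theorem congr_reflects_along_injective_relabel_general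
    (L : FirstOrder.Language.{u, v}) (E : Set (L.Term ℕ × L.Term ℕ))
    {A B : Type u} (j : A → B) (hj : Function.Injective j) :
    (∀ t s : L.Term A, EqCongr L E (t.relabel j) (s.relabel j) → EqCongr L E t s) ∧
      Function.Injective (Tmap L E j) :=
  ⟨fun _ _ => (eqCongr_relabel_iff hj).1, Tmap_injective hj⟩

theorem congr_reflects_along_injective_relabel
    (L : FirstOrder.Language.{u, v}) (halg : ∀ n, IsEmpty (L.Relations n))
    (E : Set (L.Term ℕ × L.Term ℕ))
    (hnd : ∀ p ∈ E, p.1.varFinset = p.2.varFinset)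
    {A B : Type u} (j : A → B) (hj : Function.Injective j) :
    (∀ t s : L.Term A, EqCongr L E (t.relabel j) (s.relabel j) → EqCongr L E t s) ∧
      Function.Injective (Tmap L E j) :=
  congr_reflects_along_injective_relabel_general L E j hj
end

section
/- Let I be a linear order, X a type, and P : X → I → Prop such that for each x the predicate P x is antitone (if β ≤ α and P x α then P x β). Suppose there exists n : I such that for all α ≥ n and all x, y : X, if P x α and P y α then x = y (the witness is essentially unique from stage n on). Then (∀ α : I, ∃ x : X, P x α) → (∃ x : X, ∀ α : I, P x α), and hence the two statements are equivalent. -/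
section

variable {I X : Type*} [Preorder I] [IsDirectedOrder I] {P : X → I → Prop}

theorem forall_of_forall_exists_of_subsingleton (hanti : ∀ x, Antitone (P x))
    (hex : ∀ α, ∃ x, P x α) {n : I} (hsub : {x | P x n}.Subsingleton) {x : X} (hx : P x n)
    (α : I) : P x α := by
  obtain ⟨β, hαβ, hnβ⟩ := exists_ge_ge α n
  obtain ⟨y, hy⟩ := hex β
  obtain rfl : x = y := hsub hx (hanti y hnβ hy)
  exact hanti x hαβ hy

theorem forall_exists_comm_of_essentially_unique_general (hanti : ∀ x, Antitone (P x))
    (hsub : ∃ n, {x | P x n}.Subsingleton) :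
    (∀ α, ∃ x, P x α) ↔ ∃ x, ∀ α, P x α := by
  refine ⟨fun hex => ?_, fun ⟨x, hx⟩ α => ⟨x, hx α⟩⟩
  obtain ⟨n, hn⟩ := hsub
  exact (hex n).imp fun _ hx => forall_of_forall_exists_of_subsingleton hanti hex hn hx

end

theorem forall_exists_comm_of_essentially_unique
    {I : Type*} [LinearOrder I] (X : Type*) (P : X → I → Prop)
    (hanti : ∀ x : X, Antitone (P x))
    (huniq : ∃ n : I, ∀ α : I, n ≤ α → ∀ x y : X, P x α → P y α → x = y) :
    ((∀ α : I, ∃ x : X, P x α) → ∃ x : X, ∀ α : I, P x α) ∧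
      ((∀ α : I, ∃ x : X, P x α) ↔ ∃ x : X, ∀ α : I, P x α) := by
  have comm := forall_exists_comm_of_essentially_unique_general hanti <|
    huniq.imp fun n hn x hx y hy => hn n le_rfl x y hx hy
  exact ⟨comm.mp, comm⟩
end
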